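/- Let n be a positive integer, let σ and σ' be decorated permutations of order n, and let a < b < c < d < a + n be integers. Suppose (a b) is an allowed boundary transposition for σ, (c d) is an allowed boundary transposition for σ', and σ ∘ t_{a,b} = σ' ∘ t_{c,d}. Then ρ := σ ∘ t_{c,d} is a decorated permutation of order n, (c d) is an allowed boundary transposition for ρ with ρ ∘ t_{c,d} = σ, and (a b) is an allowed boundary transposition for ρ with ρ ∘ t_{a,b} = σ'. (Thus σ and σ' have a common parent in the poset of decorated permutations, forming a quadrilateral.) -/

import Mathlib

/-- A decorated permutation of order `n`: a bijection `σ : ℤ → ℤ` with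
`σ (i + n) = σ i + n` and `i ≤ σ i ≤ i + n` for all `i`. -/
def IsDecoratedPerm (n : ℤ) (σ : ℤ → ℤ) : Prop :=
  Function.Bijective σ ∧ (∀ i : ℤ, σ (i + n) = σ i + n) ∧ ∀ i : ℤ, i ≤ σ i ∧ σ i ≤ i + n

/-- The affine transposition `t_{a,b}`: swaps `a + m*n` and `b + m*n` for every `m : ℤ`
and fixes all integers not congruent to `a` or `b` modulo `n`. -/
def affT (n a b : ℤ) (i : ℤ) : ℤ :=
  if (i - a) % n = 0 then i + (b - a)
  else if (i - b) % n = 0 then i - (b - a)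
  else i

/-- `(a b)` is an allowed boundary transposition for `σ`: `a < b < a + n`,
`b ≤ σ a < σ b ≤ a + n`, and there is no `q` with `a < q < b` and `σ a < σ q < σ b`. -/
def AllowedBT (n : ℤ) (σ : ℤ → ℤ) (a b : ℤ) : Prop :=
  a < b ∧ b < a + n ∧ b ≤ σ a ∧ σ a < σ b ∧ σ b ≤ a + n ∧
    ¬ ∃ q : ℤ, a < q ∧ q < b ∧ σ a < σ q ∧ σ q < σ b

theorem aux_ne (n k x : ℤ) (h0 : 0 < x) (h1 : x < n) : n * k ≠ x := by
  intro h
  have h2 : x % n = x := Int.emod_eq_of_lt h0.le h1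
  have h3 : x % n = 0 := by rw [← h]; simp
  omega

theorem affT_left (n a b k : ℤ) : affT n a b (a + n * k) = b + n * k := by
  unfold affT
  rw [if_pos (by simp)]; ring

theorem affT_right (n a b k : ℤ) (h : a < b) (h' : b < a + n) :
    affT n a b (b + n * k) = a + n * k := by
  unfold affT
  rw [if_neg, if_pos (by simp)]
  · ring
  · intro h0
    obtain ⟨m, hm⟩ := Int.dvd_of_emod_eq_zero h0
    exact aux_ne n (m - k) (b - a) (by omega) (by omega) (by linear_combination -hm)

theorem affT_fix (n a b i : ℤ) (h : ∀ k, i ≠ a + n * k) (h' : ∀ k, i ≠ b + n * k) :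
    affT n a b i = i := by
  unfold affT
  rw [if_neg, if_neg]
  · intro h0
    obtain ⟨m, hm⟩ := Int.dvd_of_emod_eq_zero h0
    exact h' m (by omega)
  · intro h0
    obtain ⟨m, hm⟩ := Int.dvd_of_emod_eq_zero h0
    exact h m (by omega)

theorem affT_cases (n a b i : ℤ) : (∃ k, i = a + n * k) ∨ (∃ k, i = b + n * k) ∨
    ((∀ k, i ≠ a + n * k) ∧ (∀ k, i ≠ b + n * k)) := by
  by_cases h : ∃ k, i = a + n * k
  · exact Or.inl h
  by_cases h' : ∃ k, i = b + n * k
  · exact Or.inr (Or.inl h')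
  push Not at h h'
  exact Or.inr (Or.inr ⟨h, h'⟩)

theorem affT_invol (n a b : ℤ) (h : a < b) (h' : b < a + n) (i : ℤ) :
    affT n a b (affT n a b i) = i := by
  rcases affT_cases n a b i with ⟨k, rfl⟩ | ⟨k, rfl⟩ | ⟨h1, h2⟩
  · rw [affT_left, affT_right n a b k h h']
  · rw [affT_right n a b k h h', affT_left]
  · rw [affT_fix n a b i h1 h2, affT_fix n a b i h1 h2]

theorem affT_shift (n a b i : ℤ) : affT n a b (i + n) = affT n a b i + n := by
  unfold affT
  have e1 : (i + n - a) % n = (i - a) % n := by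
    rw [show i + n - a = i - a + n by ring]; simp
  have e2 : (i + n - b) % n = (i - b) % n := by
    rw [show i + n - b = i - b + n by ring]; simp
  rw [e1, e2]
  split_ifs <;> ring

theorem per_mul (n : ℤ) (σ : ℤ → ℤ) (h : ∀ i, σ (i + n) = σ i + n) (i k : ℤ) :
    σ (i + n * k) = σ i + n * k := by
  induction k using Int.induction_on with
  | zero => simp
  | succ m ih =>
    rw [show i + n * ((m:ℤ) + 1) = i + n * m + n by ring, h, ih]; ring
  | pred m ih =>
    have := h (i + n * (-(m:ℤ) - 1))
    rw [show i + n * (-(m:ℤ) - 1) + n = i + n * (-m) by ring, ih] at this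
    linear_combination -this

theorem ne_of_window (n x y : ℤ) (h : x ≠ y) (h1 : x < y + n) (h2 : y < x + n) (k : ℤ) :
    x ≠ y + n * k := by
  intro e
  rcases lt_or_gt_of_ne h with g | g
  · exact aux_ne n (-k) (y - x) (by omega) (by omega) (by linear_combination e)
  · exact aux_ne n k (x - y) (by omega) (by omega) (by linear_combination -e)

theorem affT_fix_window (n a b x : ℤ) (h1 : x ≠ a) (h2 : x ≠ b) (h3 : x < a + n) (h4 : a < x + n)
    (h5 : x < b + n) (h6 : b < x + n) : affT n a b x = x :=
  affT_fix n a b x (ne_of_window n x a h1 h3 h4) (ne_of_window n x b h2 h5 h6)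

theorem affT_comm (n a b c d : ℤ) (hab : a < b) (hbc : b < c) (hcd : c < d) (hda : d < a + n)
    (i : ℤ) : affT n c d (affT n a b i) = affT n a b (affT n c d i) := by
  have fa : ∀ k, affT n c d (a + n * k) = a + n * k := fun k => by
    rw [per_mul n _ (affT_shift n c d), affT_fix_window] <;> omega
  have fb : ∀ k, affT n c d (b + n * k) = b + n * k := fun k => by
    rw [per_mul n _ (affT_shift n c d), affT_fix_window] <;> omega
  have fc : ∀ k, affT n a b (c + n * k) = c + n * k := fun k => by
    rw [per_mul n _ (affT_shift n a b), affT_fix_window] <;> omega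
  have fd : ∀ k, affT n a b (d + n * k) = d + n * k := fun k => by
    rw [per_mul n _ (affT_shift n a b), affT_fix_window] <;> omega
  have hb : b < a + n := by omega
  have hd : d < c + n := by omega
  rcases affT_cases n a b i with ⟨k, rfl⟩ | ⟨k, rfl⟩ | ⟨h1, h2⟩
  · rw [affT_left, fa, fb, affT_left]
  · rw [affT_right n a b k hab hb, fa, fb, affT_right n a b k hab hb]
  rcases affT_cases n c d i with ⟨k, rfl⟩ | ⟨k, rfl⟩ | ⟨h3, h4⟩
  · rw [affT_left, fc, fd, affT_left]
  · rw [affT_right n c d k hcd hd, fc, fd, affT_right n c d k hcd hd]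
  · rw [affT_fix n a b i h1 h2, affT_fix n c d i h3 h4, affT_fix n a b i h1 h2]

/-- Case `(a b)` vs `(c d)` with `a < b < c < d < a + n`: `σ` and `σ'`
have a common parent `ρ = σ ∘ t_{c,d}`, forming a quadrilateral in the poset. -/
theorem common_parent_ab_cd (n : ℤ) (hn : 0 < n) (σ σ' : ℤ → ℤ)
    (hσ : IsDecoratedPerm n σ) (hσ' : IsDecoratedPerm n σ')
    (a b c d : ℤ) (hab : a < b) (hbc : b < c) (hcd : c < d) (hda : d < a + n)
    (h1 : AllowedBT n σ a b) (h2 : AllowedBT n σ' c d)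
    (heq : σ ∘ affT n a b = σ' ∘ affT n c d) :
    IsDecoratedPerm n (σ ∘ affT n c d) ∧
    AllowedBT n (σ ∘ affT n c d) c d ∧ (σ ∘ affT n c d) ∘ affT n c d = σ ∧
    AllowedBT n (σ ∘ affT n c d) a b ∧ (σ ∘ affT n c d) ∘ affT n a b = σ' := by
  obtain ⟨hbij, hper, hbd⟩ := hσ
  obtain ⟨-, hb, a1, a2, a3, a4⟩ := h1
  obtain ⟨-, hd, c1, c2, c3, c4⟩ := h2
  have inv := affT_invol n c d hcd hd
  have key : ∀ i, σ' i = σ (affT n a b (affT n c d i)) := fun i => by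
    have := congrFun heq (affT n c d i)
    simp only [Function.comp, inv] at this
    exact this.symm
  have tc : affT n c d c = d := by simpa using affT_left n c d 0
  have td : affT n c d d = c := by simpa using affT_right n c d 0 hcd hd
  have ta : affT n c d a = a := by apply affT_fix_window <;> omega
  have tb : affT n c d b = b := by apply affT_fix_window <;> omega
  have sc : affT n a b c = c := by apply affT_fix_window <;> omega
  have sd : affT n a b d = d := by apply affT_fix_window <;> omega
  have kc : σ' c = σ d := by rw [key, tc, sd]
  have kd : σ' d = σ c := by rw [key, td, sc]
  rw [kc] at c1 c2 c4
  rw [kd] at c2 c3 c4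
  refine ⟨⟨?_, ?_, ?_⟩, ⟨hcd, hd, ?_⟩, ?_, ⟨hab, hb, ?_⟩, ?_⟩
  · exact hbij.comp (Function.Involutive.bijective inv)
  · intro i
    simp only [Function.comp, affT_shift, hper]
  · intro i
    simp only [Function.comp]
    rcases affT_cases n c d i with ⟨k, rfl⟩ | ⟨k, rfl⟩ | ⟨h1, h2⟩
    · rw [affT_left, per_mul n σ hper]
      constructor <;> linarith
    · rw [affT_right n c d k hcd hd, per_mul n σ hper]
      constructor <;> linarith
    · rw [affT_fix n c d i h1 h2]
      exact hbd i
  · simp only [Function.comp, tc, td]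
    refine ⟨c1, c2, c3, ?_⟩
    rintro ⟨q, q1, q2, q3, q4⟩
    have e1 : affT n c d q = q := by apply affT_fix_window <;> omega
    have e2 : affT n a b q = q := by apply affT_fix_window <;> omega
    rw [e1] at q3 q4
    refine c4 ⟨q, q1, q2, ?_⟩
    rw [key, e1, e2]
    exact ⟨q3, q4⟩
  · funext i
    simp only [Function.comp, inv]
  · simp only [Function.comp, ta, tb]
    refine ⟨a1, a2, a3, ?_⟩
    rintro ⟨q, q1, q2, q3, q4⟩
    have e1 : affT n c d q = q := by apply affT_fix_window <;> omega
    rw [e1] at q3 q4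
    exact a4 ⟨q, q1, q2, q3, q4⟩
  · funext i
    simp only [Function.comp]
    rw [key, affT_comm n a b c d hab hbc hcd hda]
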